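/- Let (X,d_X,μ_X) and (Y,d_Y,μ_Y) be metric measure spaces with μ_X σ-finite, μ_Y locally finite and μ_{X×Y} a Radon measure. If (X,d_X,μ_X) satisfies PL and (Y,d_Y,μ_Y) satisfies BM(0), then (X×Y,ρ,μ_{X×Y}) satisfies BM(0). -/

import Mathlib

open MeasureTheory Set Metric Filter
open scoped ENNReal NNReal Topology Pointwise

noncomputable section

/-- The `d`-convex combination `(1-λ)A ⋆_d λB` of two sets. -/
def starComb {Z : Type*} (d : Z → Z → ℝ) (lam : ℝ) (A B : Set Z) : Set Z :=
  {z | ∃ a ∈ A, ∃ b ∈ B, d z a = lam * d a b ∧ d z b = (1 - lam) * d a b}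

/-- A distance is strictly intrinsic: closed balls of radii summing to the distance
between their centers intersect. -/
def StrictlyIntrinsicDist {Z : Type*} (d : Z → Z → ℝ) : Prop :=
  ∀ x y : Z, ∀ r₁ r₂ : ℝ, 0 ≤ r₁ → 0 ≤ r₂ → r₁ + r₂ = d x y →
    ∃ z : Z, d z x ≤ r₁ ∧ d z y ≤ r₂

/-- The ℓ² (Euclidean) product metric on `X × Y`. -/
def rho {X Y : Type*} [PseudoMetricSpace X] [PseudoMetricSpace Y] (a b : X × Y) : ℝ :=
  Real.sqrt (dist a.1 b.1 ^ 2 + dist a.2 b.2 ^ 2)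

/-- The ℓ² (Euclidean) metric on a finite product of copies of a metric space. -/
def rhoPi {ι : Type*} [Fintype ι] {X : Type*} [PseudoMetricSpace X] (a b : ι → X) : ℝ :=
  Real.sqrt (∑ i, dist (a i) (b i) ^ 2)

open Classical in
/-- The `p`-th mean `M_p(a,b,λ)` of `a, b ∈ [0,∞]`, for `p ∈ ℝ ∪ {±∞}`, with the
convention that it vanishes whenever `a * b = 0`. -/
def Mp (p : EReal) (lam : ℝ) (a b : ℝ≥0∞) : ℝ≥0∞ :=
  if a = 0 ∨ b = 0 then 0
  else if p = ⊤ then max a b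
  else if p = ⊥ then min a b
  else if p = 0 then a ^ (1 - lam) * b ^ lam
  else (ENNReal.ofReal (1 - lam) * a ^ p.toReal + ENNReal.ofReal lam * b ^ p.toReal) ^ (1 / p.toReal)

open Classical in
/-- The `p`-th mean `M_p(a,b,λ)` of nonnegative reals, with the zero convention. -/
def MpR (p : EReal) (lam a b : ℝ) : ℝ :=
  if a = 0 ∨ b = 0 then 0
  else if p = ⊤ then max a b
  else if p = ⊥ then min a b
  else if p = 0 then a ^ (1 - lam) * b ^ lam
  else ((1 - lam) * a ^ p.toReal + lam * b ^ p.toReal) ^ (1 / p.toReal)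

/-- `(X,d,μ)` satisfies `BM(p)`. -/
def SatisfiesBM {X : Type*} [MeasurableSpace X] (d : X → X → ℝ) (μ : Measure X)
    (p : EReal) : Prop :=
  ∀ lam : ℝ, lam ∈ Ioo (0:ℝ) 1 → ∀ A B C : Set X, A.Nonempty → B.Nonempty →
    MeasurableSet A → MeasurableSet B → MeasurableSet C →
    μ A ≠ 0 → μ B ≠ 0 → starComb d lam A B ⊆ C →
    Mp p lam (μ A) (μ B) ≤ μ C

/-- `(X,d,μ)` satisfies the general (linear) inequality `B̄M(1)`:
`μ(C) ≥ (1-λ)μ(A) + λμ(B)` for all nonempty measurable `A, B, C` with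
`C ⊇ (1-λ)A ⋆ λB`. -/
def SatisfiesBMbarLinear {X : Type*} [MeasurableSpace X] (d : X → X → ℝ)
    (μ : Measure X) : Prop :=
  ∀ lam : ℝ, lam ∈ Ioo (0:ℝ) 1 → ∀ A B C : Set X, A.Nonempty → B.Nonempty →
    MeasurableSet A → MeasurableSet B → MeasurableSet C →
    starComb d lam A B ⊆ C →
    ENNReal.ofReal (1 - lam) * μ A + ENNReal.ofReal lam * μ B ≤ μ C

/-- `(X,d,μ)` satisfies the general inequality `B̄M(p)` for a real `p > 0`:
`μ(C) ≥ ((1-λ)μ(A)^p + λμ(B)^p)^{1/p}` for all nonempty measurable `A, B, C`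
with `C ⊇ (1-λ)A ⋆ λB`. -/
def SatisfiesBMbarPos {X : Type*} [MeasurableSpace X] (d : X → X → ℝ) (μ : Measure X)
    (p : ℝ) : Prop :=
  ∀ lam : ℝ, lam ∈ Ioo (0:ℝ) 1 → ∀ A B C : Set X, A.Nonempty → B.Nonempty →
    MeasurableSet A → MeasurableSet B → MeasurableSet C →
    starComb d lam A B ⊆ C →
    (ENNReal.ofReal (1 - lam) * μ A ^ p + ENNReal.ofReal lam * μ B ^ p) ^ (1/p) ≤ μ C

/-- `(X,d,μ)` satisfies the weighted inequality `BM(p,q)`: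
`μ(C)^p ≥ (1-λ)^q μ(A)^p + λ^q μ(B)^p` for all nonempty measurable sets of positive
measure with `C ⊇ (1-λ)A ⋆ λB`. -/
def SatisfiesBMW {X : Type*} [MeasurableSpace X] (d : X → X → ℝ) (μ : Measure X)
    (p q : ℝ) : Prop :=
  ∀ lam : ℝ, lam ∈ Ioo (0:ℝ) 1 → ∀ A B C : Set X, A.Nonempty → B.Nonempty →
    MeasurableSet A → MeasurableSet B → MeasurableSet C →
    μ A ≠ 0 → μ B ≠ 0 → starComb d lam A B ⊆ C →
    ENNReal.ofReal ((1 - lam) ^ q) * μ A ^ p + ENNReal.ofReal (lam ^ q) * μ B ^ p ≤ μ C ^ p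

/-- `(X,d,μ)` satisfies the Prékopa–Leindler inequality `PL`. -/
def SatisfiesPL {X : Type*} [MeasurableSpace X] (d : X → X → ℝ) (μ : Measure X) : Prop :=
  ∀ lam : ℝ, lam ∈ Ioo (0:ℝ) 1 → ∀ f g h : X → ℝ≥0∞,
    Measurable f → Measurable g → Measurable h →
    (∀ x y z : X, d z x = lam * d x y → d z y = (1 - lam) * d x y →
      f x ^ (1 - lam) * g y ^ lam ≤ h z) →
    (∫⁻ x, f x ∂μ) ^ (1 - lam) * (∫⁻ x, g x ∂μ) ^ lam ≤ ∫⁻ x, h x ∂μ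

open Classical in
/-- `(X,d,μ)` satisfies the Borell–Brascamp–Lieb inequality `BBL(p,m)`. -/
def SatisfiesBBL {X : Type*} [MeasurableSpace X] (d : X → X → ℝ) (μ : Measure X)
    (p m : ℝ) : Prop :=
  ∀ lam : ℝ, lam ∈ Ioo (0:ℝ) 1 → ∀ f g h : X → ℝ≥0∞,
    Measurable f → Measurable g → Measurable h →
    (∀ x y z : X, d z x = lam * d x y → d z y = (1 - lam) * d x y →
      Mp (p : EReal) lam (f x) (g y) ≤ h z) →
    Mp (if m * p + 1 = 0 then (⊥ : EReal) else ((p / (m * p + 1) : ℝ) : EReal)) lam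
      (∫⁻ x, f x ∂μ) (∫⁻ x, g x ∂μ) ≤ ∫⁻ x, h x ∂μ

/-- `φ : ℝ → ℝ` is positively decreasing: `t ↦ φ(t)` and `t ↦ φ(-t)` are
non-increasing on `[0,∞)`. -/
def PositivelyDecreasing (φ : ℝ → ℝ) : Prop :=
  (∀ s t : ℝ, 0 ≤ s → s ≤ t → φ t ≤ φ s) ∧ (∀ s t : ℝ, 0 ≤ s → s ≤ t → φ (-t) ≤ φ (-s))

/-- A set `A ⊆ ℝⁿ` is weakly unconditional. -/
def WeaklyUnconditional {n : ℕ} (A : Set (Fin n → ℝ)) : Prop :=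
  ∀ x ∈ A, ∀ ε : Fin n → ℝ, (∀ i, ε i = 0 ∨ ε i = 1) → (fun i => ε i * x i) ∈ A

/-- A nonnegative function on a real vector space is `p`-concave. -/
def PConcaveFn {E : Type*} [AddCommGroup E] [Module ℝ E] (p : EReal) (φ : E → ℝ) : Prop :=
  ∀ x y : E, ∀ lam : ℝ, lam ∈ Ioo (0:ℝ) 1 →
    MpR p lam (φ x) (φ y) ≤ φ ((1 - lam) • x + lam • y)

/-- A function on a real vector space is radially decreasing. -/
def RadiallyDecreasing {E : Type*} [AddCommGroup E] [Module ℝ E] (φ : E → ℝ) : Prop :=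
  ∀ x : E, ∀ t : ℝ, t ∈ Icc (0:ℝ) 1 → φ x ≤ φ (t • x)


/-- Corollary `c:PL`: if `X` satisfies `PL` and `Y` satisfies `BM(0)`,
then `X × Y` satisfies `BM(0)`. -/
theorem statement8 {X Y : Type*} [MetricSpace X] [MetricSpace Y]
    [MeasurableSpace X] [OpensMeasurableSpace X] [MeasurableSpace Y] [OpensMeasurableSpace Y]
    (μX : Measure X) (μY : Measure Y) [SigmaFinite μX] [IsLocallyFiniteMeasure μY]
    [IsLocallyFiniteMeasure (μX.prod μY)]
    (hdX : StrictlyIntrinsicDist (dist : X → X → ℝ))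
    (hdY : StrictlyIntrinsicDist (dist : Y → Y → ℝ))
    (hRadon : (μX.prod μY).InnerRegular)
    (hX : SatisfiesPL (dist : X → X → ℝ) μX)
    (hY : SatisfiesBM (dist : Y → Y → ℝ) μY (0 : EReal)) :
    SatisfiesBM (rho : X × Y → X × Y → ℝ) (μX.prod μY) (0 : EReal) := by
  intro lam hlam A B C _ _ hA hB hC hA0 hB0 hsub
  have h1 : 0 < 1 - lam := by linarith [hlam.2]
  by_cases hm : AEMeasurable (fun x : X => Measure.map (Prod.mk x : Y → X × Y) μY) μX
  swap
  · exfalso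
    apply hA0
    rw [Measure.prod, Measure.bind, Measure.map_of_not_aemeasurable hm]
    simp
  have key : ∀ S : Set (X × Y), MeasurableSet S →
      (μX.prod μY) S = ∫⁻ x, μY (Prod.mk x ⁻¹' S) ∂μX := by
    intro S hS
    rw [Measure.prod, Measure.bind_apply hS hm]
    refine lintegral_congr fun x => ?_
    rw [Measure.map_apply measurable_prodMk_left hS]
  have hae : AEMeasurable (fun x => μY (Prod.mk x ⁻¹' C)) μX := by
    have := (Measure.measurable_coe hC).comp_aemeasurable hm
    refine this.congr (Eventually.of_forall fun x => ?_)
    simp only [Function.comp]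
    rw [Measure.map_apply measurable_prodMk_left hC]
  obtain ⟨f, hf, hfle, hfint⟩ := exists_measurable_le_lintegral_eq μX
    (fun x => μY (Prod.mk x ⁻¹' A))
  obtain ⟨g, hg, hgle, hgint⟩ := exists_measurable_le_lintegral_eq μX
    (fun x => μY (Prod.mk x ⁻¹' B))
  obtain ⟨h, hh, hhle, hhint⟩ : ∃ h : X → ℝ≥0∞, Measurable h ∧
      (∀ x, μY (Prod.mk x ⁻¹' C) ≤ h x) ∧ ∫⁻ x, h x ∂μX = ∫⁻ x, μY (Prod.mk x ⁻¹' C) ∂μX := by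
    classical
    set N := toMeasurable μX {x | ¬ μY (Prod.mk x ⁻¹' C) = hae.mk _ x} with hN
    have hN0 : μX N = 0 := by
      rw [hN, measure_toMeasurable]
      exact hae.ae_eq_mk
    have hsubN : {x | ¬ μY (Prod.mk x ⁻¹' C) = hae.mk _ x} ⊆ N := subset_toMeasurable _ _
    refine ⟨N.piecewise (fun _ => ⊤) (hae.mk _),
      Measurable.piecewise (measurableSet_toMeasurable _ _) measurable_const hae.measurable_mk,
      fun x => ?_, ?_⟩
    · by_cases hx : x ∈ N
      · simp [hx]
      · have : μY (Prod.mk x ⁻¹' C) = hae.mk _ x := by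
          by_contra hc
          exact hx (hsubN hc)
        simp [hx, this]
    · refine lintegral_congr_ae ?_
      have : ∀ᵐ x ∂μX, x ∉ N := measure_eq_zero_iff_ae_notMem.1 hN0
      filter_upwards [this, hae.ae_eq_mk] with x hx hx2
      simp [hx, hx2]
  have hPL := hX lam hlam f g h hf hg hh (by
    intro x y z hzx hzy
    by_cases hx0 : μY (Prod.mk x ⁻¹' A) = 0
    · have : f x = 0 := le_antisymm ((hfle x).trans hx0.le) bot_le
      simp [this, h1]
    by_cases hy0 : μY (Prod.mk y ⁻¹' B) = 0
    · have : g y = 0 := le_antisymm ((hgle y).trans hy0.le) bot_le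
      simp [this, hlam.1]
    have hb := hY lam hlam (Prod.mk x ⁻¹' A) (Prod.mk y ⁻¹' B) (Prod.mk z ⁻¹' C)
      (nonempty_of_measure_ne_zero hx0) (nonempty_of_measure_ne_zero hy0)
      (measurable_prodMk_left hA) (measurable_prodMk_left hB) (measurable_prodMk_left hC)
      hx0 hy0 (by
        rintro w ⟨a, ha, b, hb, hwa, hwb⟩
        refine hsub ⟨(x, a), ha, (y, b), hb, ?_, ?_⟩
        · simp only [rho]
          rw [hzx, hwa, mul_pow, mul_pow, ← mul_add, Real.sqrt_mul (sq_nonneg _),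
            Real.sqrt_sq hlam.1.le]
        · simp only [rho]
          rw [hzy, hwb, mul_pow, mul_pow, ← mul_add, Real.sqrt_mul (sq_nonneg _),
            Real.sqrt_sq h1.le])
    have hb' : μY (Prod.mk x ⁻¹' A) ^ (1 - lam) * μY (Prod.mk y ⁻¹' B) ^ lam
        ≤ μY (Prod.mk z ⁻¹' C) := by
      simpa [Mp, hx0, hy0] using hb
    refine le_trans ?_ (hb'.trans (hhle z))
    exact mul_le_mul' (ENNReal.rpow_le_rpow (hfle x) h1.le)
      (ENNReal.rpow_le_rpow (hgle y) hlam.1.le))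
  rw [← hfint, ← hgint, hhint, ← key A hA, ← key B hB, ← key C hC] at hPL
  simpa [Mp, hA0, hB0] using hPL


end
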